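/- Let K be a field and let A and B be K-algebras which are Morita equivalent, i.e. there is a K-linear equivalence between the category of (left) A-modules and the category of (left) B-modules. Then there is a K-linear isomorphism of vector spaces A/[A,A] ≅ B/[B,B]. -/

import Mathlib

open CategoryTheory

/-- The `K`-submodule of an algebra `A` spanned by all commutators `a * b - b * a`. -/
def commutatorSubmodule (K A : Type*) [CommRing K] [Ring A] [Algebra K A] : Submodule K A :=
  Submodule.span K {x : A | ∃ a b : A, x = a * b - b * a}

/-!
A finitely generated projective module has a Hattori–Stallings trace. Categorically, if an object
`X` of a `K`-linear category is a direct summand of a finite power of `Y`, then an endomorphism of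
`X` has a trace in `End Y / [End Y, End Y]`, the sum of the diagonal entries of the induced matrix
over `End Y`. This trace is cyclic, so it factors through `End X / [End X, End X]`; if moreover `Y`
is a direct summand of a finite power of `X`, cyclicity also shows that the two resulting maps are
mutually inverse. Under a Morita equivalence the regular `A`-module becomes a separator of the
category of `B`-modules, and this makes it and the regular `B`-module direct summands of finite
powers of each other. Their endomorphism algebras are `Aᵐᵒᵖ` and `Bᵐᵒᵖ`, and passing to the
opposite algebra does not change the span of the commutators.
-/

universe v w w'

section CommutatorQuotient

variable (K : Type*) [CommRing K]

/-- The quotient `A / [A, A]`, that is, the zeroth Hochschild homology of the `K`-algebra `A`. -/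
abbrev CommutatorQuotient (A : Type*) [Ring A] [Algebra K A] : Type _ :=
  A ⧸ commutatorSubmodule K A

variable {A B : Type*} [Ring A] [Algebra K A] [Ring B] [Algebra K B]

lemma mkQ_commutatorSubmodule_mul_comm (a b : A) :
    (commutatorSubmodule K A).mkQ (a * b) = (commutatorSubmodule K A).mkQ (b * a) := by
  rw [← sub_eq_zero, ← map_sub, Submodule.mkQ_apply, Submodule.Quotient.mk_eq_zero]
  exact Submodule.subset_span ⟨a, b, rfl⟩

variable {K}

lemma commutatorSubmodule_le_ker {M : Type*} [AddCommGroup M] [Module K M] (φ : A →ₗ[K] M)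
    (hφ : ∀ a b, φ (a * b) = φ (b * a)) : commutatorSubmodule K A ≤ LinearMap.ker φ := by
  refine Submodule.span_le.2 ?_
  rintro _ ⟨a, b, rfl⟩
  simp [hφ a b]

lemma map_commutatorSubmodule_algEquiv (e : A ≃ₐ[K] B) :
    (commutatorSubmodule K A).map e.toLinearEquiv.toLinearMap = commutatorSubmodule K B := by
  rw [commutatorSubmodule, Submodule.map_span, commutatorSubmodule]
  congr 1
  ext x
  constructor
  · rintro ⟨_, ⟨a, b, rfl⟩, rfl⟩
    exact ⟨e a, e b, by simp⟩
  · rintro ⟨a, b, rfl⟩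
    exact ⟨_, ⟨e.symm a, e.symm b, rfl⟩, by simp⟩

variable (K A) in
lemma map_commutatorSubmodule_op :
    (commutatorSubmodule K A).map (MulOpposite.opLinearEquiv K).toLinearMap =
      commutatorSubmodule K Aᵐᵒᵖ := by
  rw [commutatorSubmodule, Submodule.map_span, commutatorSubmodule]
  congr 1
  ext x
  constructor
  · rintro ⟨_, ⟨a, b, rfl⟩, rfl⟩
    exact ⟨.op b, .op a, by simp⟩
  · rintro ⟨a, b, rfl⟩
    exact ⟨_, ⟨b.unop, a.unop, rfl⟩, by simp⟩

namespace CommutatorQuotient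

/-- An isomorphism of algebras induces an isomorphism of their commutator quotients. -/
noncomputable def congr (e : A ≃ₐ[K] B) : CommutatorQuotient K A ≃ₗ[K] CommutatorQuotient K B :=
  Submodule.Quotient.equiv _ _ e.toLinearEquiv (map_commutatorSubmodule_algEquiv e)

variable (K A) in
/-- An algebra and its opposite have the same commutator quotient. -/
noncomputable def opEquiv : CommutatorQuotient K A ≃ₗ[K] CommutatorQuotient K Aᵐᵒᵖ :=
  Submodule.Quotient.equiv _ _ (MulOpposite.opLinearEquiv K) (map_commutatorSubmodule_op K A)

end CommutatorQuotient

end CommutatorQuotient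

section Trace

variable (K : Type*) [CommRing K] {C : Type*} [Category* C] [Preadditive C] [Linear K C]

/-- The class of an endomorphism of `X` in `End X / [End X, End X]`, through which every trace
function on `End X` factors. -/
def universalTrace (X : C) : (X ⟶ X) →ₗ[K] CommutatorQuotient K (End X) :=
  (commutatorSubmodule K (End X)).mkQ

lemma universalTrace_comp_comm {X : C} (f g : X ⟶ X) :
    universalTrace K X (f ≫ g) = universalTrace K X (g ≫ f) :=
  mkQ_commutatorSubmodule_mul_comm K (A := End X) g f

end Trace

/-- A presentation of `X` as a direct summand of a finite power of `Y`. No biproduct is formed: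
the two maps `X ⟶ Yⁿ ⟶ X` are recorded by their components. -/
structure PowerRetract {C : Type*} [Category* C] [Preadditive C] (X Y : C) where
  ι : Type w
  [fintype : Fintype ι]
  incl : ι → (X ⟶ Y)
  proj : ι → (Y ⟶ X)
  sum_incl_comp_proj : ∑ i, incl i ≫ proj i = 𝟙 X

namespace PowerRetract

attribute [instance] PowerRetract.fintype

variable {C D : Type*} [Category* C] [Preadditive C] [Category* D] [Preadditive D]

/-- Every object is a direct summand of its first power. -/
def refl (X : C) : PowerRetract X X where
  ι := Unit
  incl _ := 𝟙 X
  proj _ := 𝟙 X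
  sum_incl_comp_proj := by simp

/-- The image under an equivalence of a presentation of `X` as a summand of a power of
`e.inverse.obj Y`. -/
def ofEquivalence (e : C ≌ D) [e.functor.Additive] {X : C} {Y : D}
    (r : PowerRetract.{w} X (e.inverse.obj Y)) : PowerRetract.{w} (e.functor.obj X) Y where
  ι := r.ι
  incl i := e.functor.map (r.incl i) ≫ e.counit.app Y
  proj i := e.counitInv.app Y ≫ e.functor.map (r.proj i)
  sum_incl_comp_proj := by
    simpa [Functor.map_sum] using congrArg e.functor.map r.sum_incl_comp_proj

variable (K : Type*) [CommRing K] [Linear K C] {X Y Z : C}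

/-- The Hattori–Stallings trace: the sum of the diagonal entries of the matrix over `End Y` that
an endomorphism of `X` induces on a power of `Y`. -/
def trace (r : PowerRetract.{w} X Y) : (X ⟶ X) →ₗ[K] CommutatorQuotient K (End Y) :=
  universalTrace K Y ∘ₗ ∑ i, Linear.leftComp K Y (r.proj i) ∘ₗ Linear.rightComp K X (r.incl i)

lemma trace_apply (r : PowerRetract.{w} X Y) (a : X ⟶ X) :
    r.trace K a = ∑ i, universalTrace K Y (r.proj i ≫ a ≫ r.incl i) := by
  simp [trace]

lemma trace_refl : (refl X).trace K = universalTrace K X := by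
  ext a
  simp [trace_apply, refl]

lemma trace_comp (r : PowerRetract.{w} X Y) (s : PowerRetract.{w'} Z Y) (f : X ⟶ Z) (g : Z ⟶ X) :
    r.trace K (f ≫ g) = ∑ i, ∑ j,
      universalTrace K Y ((r.proj i ≫ f ≫ s.incl j) ≫ (s.proj j ≫ g ≫ r.incl i)) := by
  have insert_id : f ≫ g = ∑ j, f ≫ (s.incl j ≫ s.proj j) ≫ g := by
    rw [← Preadditive.comp_sum, ← Preadditive.sum_comp, s.sum_incl_comp_proj, Category.id_comp]
  rw [trace_apply]
  refine Finset.sum_congr rfl fun i _ => ?_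
  simp only [insert_id, Preadditive.comp_sum, Preadditive.sum_comp, map_sum, Category.assoc]

lemma trace_comp_comm (r : PowerRetract.{w} X Y) (s : PowerRetract.{w'} Z Y)
    (f : X ⟶ Z) (g : Z ⟶ X) : r.trace K (f ≫ g) = s.trace K (g ≫ f) := by
  rw [trace_comp K r s, trace_comp K s r, Finset.sum_comm]
  exact Finset.sum_congr rfl fun j _ => Finset.sum_congr rfl fun i _ =>
    universalTrace_comp_comm K _ _

/-- The map `End X / [End X, End X] → End Y / [End Y, End Y]` induced by the trace. -/
def transfer (r : PowerRetract.{w} X Y) :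
    CommutatorQuotient K (End X) →ₗ[K] CommutatorQuotient K (End Y) :=
  (commutatorSubmodule K (End X)).liftQ (r.trace K) <|
    commutatorSubmodule_le_ker (A := End X) (r.trace K) fun a b => r.trace_comp_comm K r b a

lemma transfer_universalTrace (r : PowerRetract.{w} X Y) (a : X ⟶ X) :
    r.transfer K (universalTrace K X a) = r.trace K a :=
  rfl

lemma transfer_comp_transfer (r : PowerRetract.{w} X Y) (s : PowerRetract.{w'} Y X) :
    s.transfer K ∘ₗ r.transfer K = LinearMap.id := by
  refine Submodule.linearMap_qext _ (LinearMap.ext fun (a : X ⟶ X) => ?_)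
  calc s.transfer K (r.transfer K (universalTrace K X a))
      = ∑ i, s.trace K ((r.proj i ≫ a) ≫ r.incl i) := by
        simp only [transfer_universalTrace, trace_apply K r, map_sum, Category.assoc]
    _ = ∑ i, universalTrace K X (r.incl i ≫ r.proj i ≫ a) :=
        Finset.sum_congr rfl fun i _ => by rw [s.trace_comp_comm K (refl X), trace_refl]
    _ = universalTrace K X a := by
        simp only [← map_sum, ← Category.assoc, ← Preadditive.sum_comp, r.sum_incl_comp_proj,
          Category.id_comp]

/-- Objects that are direct summands of finite powers of each other have endomorphism algebras
with isomorphic commutator quotients. -/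
def transferEquiv (r : PowerRetract.{w} X Y) (s : PowerRetract.{w'} Y X) :
    CommutatorQuotient K (End X) ≃ₗ[K] CommutatorQuotient K (End Y) :=
  LinearEquiv.ofLinearMap (r.transfer K) (s.transfer K)
    (transfer_comp_transfer K s r) (transfer_comp_transfer K r s)

end PowerRetract

section FullyFaithful

variable (K : Type*) [CommRing K] {C D : Type*} [Category* C] [Preadditive C] [Linear K C]
  [Category* D] [Preadditive D] [Linear K D]

/-- A fully faithful `K`-linear functor identifies endomorphism algebras. -/
noncomputable def endAlgEquivOfFullyFaithful (F : C ⥤ D) [F.Additive] [F.Linear K] [F.Full]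
    [F.Faithful] (X : C) : End X ≃ₐ[K] End (F.obj X) :=
  AlgEquiv.ofLinearEquiv
    (LinearEquiv.ofBijective (F.mapLinearMap K (X := X) (Y := X))
      ⟨F.map_injective, F.map_surjective⟩)
    (F.map_id X) (fun f g => F.map_comp g f)

end FullyFaithful

section RegularModule

/-- The regular module over `R`, moved to the universe of the module category under
consideration. -/
noncomputable abbrev regularModule (R : Type*) [Ring R] [Small.{v} R] : ModuleCat.{v} R :=
  ModuleCat.of R (Shrink.{v} R)

variable {R : Type*} [Ring R]

/-- The regular module represents the underlying-set functor: a morphism out of it is determined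
by the image of `1`, which is arbitrary. -/
noncomputable def regularModuleHomEquiv [Small.{v} R] (M : ModuleCat.{v} R) :
    (regularModule.{v} R ⟶ M) ≃+ M where
  toFun f := f.hom (1 : Shrink.{v} R)
  invFun m :=
    ModuleCat.ofHom (LinearMap.toSpanSingleton R M m ∘ₗ (Shrink.linearEquiv.{v} R R).toLinearMap)
  left_inv f := by
    refine ModuleCat.hom_ext (LinearMap.ext fun (x : Shrink.{v} R) => ?_)
    have smul_one_eq : Shrink.linearEquiv.{v} R R x • (1 : Shrink.{v} R) = x :=
      (Shrink.linearEquiv.{v} R R).injective (by simp)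
    exact (f.hom.map_smul _ _).symm.trans (congrArg f.hom smul_one_eq)
  right_inv m := by simp
  map_add' f g := rfl

lemma regularModuleHomEquiv_comp [Small.{v} R] {M N : ModuleCat.{v} R}
    (f : regularModule.{v} R ⟶ M) (g : M ⟶ N) :
    regularModuleHomEquiv N (f ≫ g) = g.hom (regularModuleHomEquiv M f) :=
  rfl

lemma iSup_range_hom_eq_top_of_isSeparator {P : ModuleCat.{v} R}
    (hP : IsSeparator P) (M : ModuleCat.{v} R) : ⨆ f : P ⟶ M, LinearMap.range f.hom = ⊤ := by
  set T : Submodule R M := ⨆ f : P ⟶ M, LinearMap.range f.hom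
  have mkQ_eq_zero : ModuleCat.ofHom T.mkQ = 0 := by
    refine (Preadditive.isSeparator_iff P).1 hP _ fun f => ?_
    ext p
    have hom_mem : f.hom p ∈ T := Submodule.mem_iSup_of_mem f ⟨p, rfl⟩
    simpa using hom_mem
  rw [← T.ker_mkQ, LinearMap.ker_eq_top]
  exact congrArg ModuleCat.Hom.hom mkQ_eq_zero

lemma nonempty_powerRetract_regularModule [Small.{v} R] {P : ModuleCat.{v} R}
    (hP : IsSeparator P) : Nonempty (PowerRetract.{v} (regularModule.{v} R) P) := by
  have one_mem : (1 : Shrink.{v} R) ∈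
      ⨆ f : P ⟶ regularModule.{v} R, LinearMap.range f.hom := by
    rw [iSup_range_hom_eq_top_of_isSeparator hP]
    exact Submodule.mem_top
  obtain ⟨s, hs⟩ := Submodule.mem_iSup_iff_exists_finset.1 one_mem
  obtain ⟨y, sum_y⟩ := (Submodule.mem_iSup_finset_iff_exists_sum _ _).1 hs
  choose p hp using fun f => (y f).2
  let g (f : s) : regularModule.{v} R ⟶ P := (regularModuleHomEquiv P).symm (p f)
  refine ⟨⟨s, g, fun f => f.1, (regularModuleHomEquiv (regularModule.{v} R)).injective ?_⟩⟩
  calc regularModuleHomEquiv (regularModule.{v} R) (∑ f : s, g f ≫ f.1)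
      = ∑ f : s, f.1.hom (regularModuleHomEquiv P (g f)) := by
        rw [map_sum]
        exact Finset.sum_congr rfl fun f _ => regularModuleHomEquiv_comp (g f) f.1
    _ = ∑ f : s, (y f.1).1 := by simp only [g, AddEquiv.apply_symm_apply, hp]
    _ = 1 := (Finset.sum_coe_sort s fun f => (y f).1).trans sum_y

open scoped ModuleCat.Algebra

variable (K : Type*) [CommRing K] (A : Type*) [Ring A] [Algebra K A] [Small.{v} A]

/-- An element of an algebra acts on the regular module by right multiplication, which reverses
the order of products. -/
noncomputable def opAlgEquivEndRegularModule : Aᵐᵒᵖ ≃ₐ[K] End (regularModule.{v} A) :=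
  AlgEquiv.ofRingEquiv
    (f := (RingEquiv.moduleEndSelf A).trans <|
      (Shrink.linearEquiv.{v} A A).symm.conjRingEquiv.trans
        (ModuleCat.endRingEquiv (regularModule.{v} A)).symm)
    fun k => by
      apply (regularModuleHomEquiv _).injective
      change (Shrink.linearEquiv.{v} A A).symm (Shrink.linearEquiv.{v} A A 1 * algebraMap K A k) =
        algebraMap K A k • (1 : Shrink.{v} A)
      rw [LinearEquiv.symm_apply_eq, map_smul, smul_eq_mul, Algebra.commutes]

/-- The commutator quotient of an algebra is that of the endomorphism algebra of its regular
module. -/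
noncomputable def commutatorQuotientEquivEndRegularModule :
    CommutatorQuotient K A ≃ₗ[K] CommutatorQuotient K (End (regularModule.{v} A)) :=
  CommutatorQuotient.opEquiv K A ≪≫ₗ
    CommutatorQuotient.congr (opAlgEquivEndRegularModule.{v} K A)

end RegularModule

open scoped ModuleCat.Algebra in
theorem morita_equiv_iso_quot_commutator_general (K : Type*) [CommRing K] {A B : Type*}
    [Ring A] [Algebra K A] [Ring B] [Algebra K B] [Small.{v} A] [Small.{v} B]
    (e : ModuleCat.{v} A ≌ ModuleCat.{v} B) (he : e.functor.Linear K) :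
    Nonempty ((A ⧸ commutatorSubmodule K A) ≃ₗ[K] (B ⧸ commutatorSubmodule K B)) := by
  have : e.functor.Additive := e.functor.additive_of_preserves_binary_products
  obtain ⟨r⟩ := nonempty_powerRetract_regularModule
    ((ModuleCat.isSeparator B).of_equivalence e.symm)
  obtain ⟨s⟩ := nonempty_powerRetract_regularModule
    ((ModuleCat.isSeparator A).of_equivalence e)
  exact ⟨commutatorQuotientEquivEndRegularModule K A ≪≫ₗ
    CommutatorQuotient.congr (endAlgEquivOfFullyFaithful K e.functor _) ≪≫ₗ
    PowerRetract.transferEquiv K (r.ofEquivalence e) s ≪≫ₗ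
    (commutatorQuotientEquivEndRegularModule K B).symm⟩

universe u

/-- If two `K`-algebras `A` and `B` are Morita equivalent, i.e. there is a `K`-linear
equivalence between their module categories, then `A/[A,A] ≅ B/[B,B]` as `K`-vector spaces. -/
theorem morita_equiv_iso_quot_commutator (K : Type u) [Field K]
    (A B : Type u) [Ring A] [Algebra K A] [Ring B] [Algebra K B]
    (h : ∃ (e : ModuleCat.{u} A ≌ ModuleCat.{u} B) (_ : e.functor.Additive),
      e.functor.Linear K) :
    Nonempty ((A ⧸ commutatorSubmodule K A) ≃ₗ[K] (B ⧸ commutatorSubmodule K B)) := by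
  obtain ⟨e, _, he⟩ := h
  exact morita_equiv_iso_quot_commutator_general K e he
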